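/- For every dimension d ≥ 1, every degree k ∈ ℕ, every ρ > 0, and all exponents p, q ∈ [1, +∞) with p ≤ q and 1/q ≥ 1/p − 1/d, there exists a constant C > 0 depending only on d, ρ, k, q and p such that: for every open bounded set T ⊆ ℝ^d with diameter h_T which is star-shaped with respect to a ball of radius ρ·h_T, and every polynomial w : ℝ^d → ℝ of total degree at most k satisfying ∫_T w(x) dx = 0, one has ‖w‖_{L^q(T)} ≤ C · h_T^{1 + d/q − d/p} · ‖∇w‖_{L^p(T; ℝ^d)}. -/

import Mathlib

open MeasureTheory Metric Set
open scoped ENNReal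

noncomputable section

/-- `w : ℝ^d → ℝ` is (given by) a multivariate polynomial of total degree at most `k`. -/
def IsPolyDegLE (d k : ℕ) (w : EuclideanSpace ℝ (Fin d) → ℝ) : Prop :=
  ∃ P : MvPolynomial (Fin d) ℝ, P.totalDegree ≤ k ∧ ∀ x, w x = MvPolynomial.eval (fun i => x i) P

/-- `T` is star-shaped with respect to a ball of radius `ρ * diam T`. -/
def StarShapedWrtBall {d : ℕ} (ρ : ℝ) (T : Set (EuclideanSpace ℝ (Fin d))) : Prop :=
  ∃ c, Metric.ball c (ρ * Metric.diam T) ⊆ T ∧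
    ∀ x ∈ Metric.ball c (ρ * Metric.diam T), ∀ y ∈ T, segment ℝ x y ⊆ T

/-- The polynomial function attached to `P`. -/
def pfun {d : ℕ} (P : MvPolynomial (Fin d) ℝ) : EuclideanSpace ℝ (Fin d) → ℝ :=
  fun x => MvPolynomial.eval (fun i => x i) P

lemma pfun_analytic {d : ℕ} (P : MvPolynomial (Fin d) ℝ) :
    AnalyticOnNhd ℝ (pfun P) univ := by
  intro x _
  have h := AnalyticAt.aeval_mvPolynomial (𝕜 := ℝ) (A := ℝ) (B := ℝ)
    (f := fun (x : EuclideanSpace ℝ (Fin d)) i => x i) (z := x)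
    (fun i => (EuclideanSpace.proj (𝕜 := ℝ) i : EuclideanSpace ℝ (Fin d) →L[ℝ] ℝ).analyticAt x) P
  exact h

lemma pfun_contDiff {d : ℕ} (P : MvPolynomial (Fin d) ℝ) : ContDiff ℝ 1 (pfun P) :=
  contDiff_iff_contDiffAt.2 fun x => (pfun_analytic P x (mem_univ x)).contDiffAt

lemma pfun_diff {d : ℕ} (P : MvPolynomial (Fin d) ℝ) : Differentiable ℝ (pfun P) :=
  (pfun_contDiff P).differentiable (by norm_num)

lemma grad_cont {d : ℕ} (P : MvPolynomial (Fin d) ℝ) :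
    Continuous (fun x => gradient (pfun P) x) := by
  unfold gradient
  exact (LinearIsometryEquiv.continuous _).comp ((pfun_contDiff P).continuous_fderiv (by norm_num))

lemma grad_memLp {d : ℕ} (P : MvPolynomial (Fin d) ℝ) (r : ℝ) (p : ℝ≥0∞) :
    MemLp (fun x => gradient (pfun P) x) p (volume.restrict (ball 0 r)) := by
  obtain ⟨M, hM⟩ := (isCompact_closedBall (0 : EuclideanSpace ℝ (Fin d)) r).exists_bound_of_continuousOn
    (grad_cont P).continuousOn
  have : IsFiniteMeasure (volume.restrict (ball (0 : EuclideanSpace ℝ (Fin d)) r)) :=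
    ⟨by simpa using measure_ball_lt_top⟩
  refine MemLp.of_bound (grad_cont P).aestronglyMeasurable M ?_
  exact (ae_restrict_iff' measurableSet_ball).2 (.of_forall fun x hx => hM x (ball_subset_closedBall hx))

lemma fin_dim_bound {V F G : Type*} [AddCommGroup V] [Module ℝ V] [Module.Finite ℝ V]
    [NormedAddCommGroup F] [NormedSpace ℝ F] [NormedAddCommGroup G] [NormedSpace ℝ G]
    (L : V →ₗ[ℝ] F) (A : V →ₗ[ℝ] G) (h : LinearMap.ker L ≤ LinearMap.ker A) :
    ∃ C : ℝ, 0 ≤ C ∧ ∀ v, ‖A v‖ ≤ C * ‖L v‖ := by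
  let H : LinearMap.range L →ₗ[ℝ] G :=
    ((LinearMap.ker L).liftQ A h) ∘ₗ (L.quotKerEquivRange.symm : _ →ₗ[ℝ] _)
  let H' := LinearMap.toContinuousLinearMap H
  refine ⟨‖H'‖, H'.opNorm_nonneg, fun v => ?_⟩
  have e : H' ⟨L v, v, rfl⟩ = A v := by
    change ((LinearMap.ker L).liftQ A h) (L.quotKerEquivRange.symm ⟨L v, v, rfl⟩) = A v
    have : L.quotKerEquivRange.symm ⟨L v, v, rfl⟩ = Submodule.Quotient.mk v := by
      rw [LinearEquiv.symm_apply_eq]; rfl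
    rw [this]; simp
  rw [← e]
  exact H'.le_opNorm _

lemma ref_bound (d k : ℕ) (ρ : ℝ) (hρ : 0 < ρ) (p : ℝ≥0∞) (hp : 1 ≤ p) :
    ∃ C : ℝ, 0 ≤ C ∧ ∀ P : MvPolynomial (Fin d) ℝ, P.totalDegree ≤ k →
      ∃ M : ℝ, 0 ≤ M ∧ (∀ y ∈ closedBall (0 : EuclideanSpace ℝ (Fin d)) 1,
        |pfun P y - pfun P 0| ≤ M) ∧
        ENNReal.ofReal M ≤ ENNReal.ofReal C *
          eLpNorm (fun x => gradient (pfun P) x) p (volume.restrict (ball 0 ρ)) := by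
  have : Fact (1 ≤ p) := ⟨hp⟩
  let E := EuclideanSpace ℝ (Fin d)
  have : CompactSpace (closedBall (0 : E) 1) := isCompact_iff_compactSpace.mp (isCompact_closedBall 0 1)
  let V := MvPolynomial.restrictTotalDegree (Fin d) ℝ k
  let L : V →ₗ[ℝ] Lp E p (volume.restrict (ball (0 : E) ρ)) :=
    { toFun := fun P => (grad_memLp P.1 ρ p).toLp
      map_add' := by
        intro P Q
        rw [← MemLp.toLp_add]
        congr 1
        funext x
        have : pfun (P + Q).1 = pfun P.1 + pfun Q.1 := by
          funext x; simp [pfun]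
        rw [this]
        simp only [gradient, Pi.add_apply]
        rw [fderiv_add (pfun_diff _ x) (pfun_diff _ x), map_add]
      map_smul' := by
        intro c P
        rw [RingHom.id_apply, ← MemLp.toLp_const_smul]
        congr 1
        funext x
        have : pfun (c • P).1 = c • pfun P.1 := by
          funext x; simp [pfun, MvPolynomial.smul_eval]
        rw [this]
        simp only [gradient, Pi.smul_apply]
        rw [fderiv_const_smul (pfun_diff _ x)]
        simp }
  let A : V →ₗ[ℝ] C(closedBall (0 : E) 1, ℝ) :=
    { toFun := fun P => ⟨fun y => pfun P.1 y - pfun P.1 0,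
        ((pfun_contDiff P.1).continuous.comp continuous_subtype_val).sub continuous_const⟩
      map_add' := by
        intro P Q
        ext y
        simp [pfun]; ring
      map_smul' := by
        intro c P
        ext y
        simp [pfun, MvPolynomial.smul_eval]; ring }
  have hker : LinearMap.ker L ≤ LinearMap.ker A := by
    intro P hP
    have h0 : (grad_memLp P.1 ρ p).toLp = 0 := hP
    have h1 : (fun x => gradient (pfun P.1) x) =ᵐ[volume.restrict (ball (0 : E) ρ)] 0 := by
      have := (grad_memLp P.1 ρ p).coeFn_toLp
      rw [h0] at this
      exact this.symm.trans (Lp.coeFn_zero _ _ _)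
    have h2 : EqOn (fun x => gradient (pfun P.1) x) 0 (ball (0 : E) ρ) :=
      Measure.eqOn_open_of_ae_eq h1 isOpen_ball (grad_cont P.1).continuousOn continuousOn_const
    have h3 : (ball (0 : E) ρ).EqOn (fderiv ℝ (pfun P.1)) 0 := by
      intro x hx
      rw [← toDual_gradient]
      have := h2 hx
      simp only [Pi.zero_apply] at this
      rw [this]; simp
    have h4 : pfun P.1 = fun _ => pfun P.1 0 := by
      refine (pfun_analytic P.1).eq_of_eventuallyEq (z₀ := 0) analyticOnNhd_const ?_
      filter_upwards [ball_mem_nhds (0 : E) hρ] with x hx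
      exact isOpen_ball.is_const_of_fderiv_eq_zero (convex_ball _ _).isPreconnected
        (pfun_diff P.1).differentiableOn h3 hx (mem_ball_self hρ)
    rw [LinearMap.mem_ker]
    ext y
    change pfun P.1 y - pfun P.1 0 = 0
    rw [h4]; simp
  obtain ⟨C, hC, hb⟩ := fin_dim_bound L A hker
  refine ⟨C, hC, fun P hP => ?_⟩
  let Q : V := ⟨P, (MvPolynomial.mem_restrictTotalDegree _ _ _).2 hP⟩
  refine ⟨‖A Q‖, norm_nonneg _, fun y hy => ?_, ?_⟩
  · exact (A Q).norm_coe_le_norm ⟨y, hy⟩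
  · refine (ENNReal.ofReal_le_ofReal (hb Q)).trans ?_
    rw [ENNReal.ofReal_mul hC]
    gcongr
    change ENNReal.ofReal ‖(grad_memLp P ρ p).toLp‖ ≤ _
    rw [Lp.norm_toLp]
    exact ENNReal.ofReal_toReal_le

lemma exists_affine {d k : ℕ} (P : MvPolynomial (Fin d) ℝ) (hP : P.totalDegree ≤ k)
    (c : EuclideanSpace ℝ (Fin d)) (h : ℝ) :
    ∃ Q : MvPolynomial (Fin d) ℝ, Q.totalDegree ≤ k ∧ pfun Q = fun y => pfun P (c + h • y) := by
  let g : Fin d → MvPolynomial (Fin d) ℝ :=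
    fun i => MvPolynomial.C (c i) + MvPolynomial.C h * MvPolynomial.X i
  have hg : ∀ i, (g i).totalDegree ≤ 1 := by
    intro i
    refine (MvPolynomial.totalDegree_add _ _).trans (max_le (by simp) ?_)
    refine (MvPolynomial.totalDegree_mul _ _).trans ?_
    simp
  refine ⟨MvPolynomial.bind₁ g P, ?_, ?_⟩
  · rw [MvPolynomial.bind₁, MvPolynomial.aeval_def, MvPolynomial.eval₂_eq']
    refine MvPolynomial.totalDegree_finsetSum_le fun s hs => ?_
    refine (MvPolynomial.totalDegree_mul _ _).trans ?_
    have h1 : (algebraMap ℝ (MvPolynomial (Fin d) ℝ) (P.coeff s)).totalDegree = 0 :=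
      MvPolynomial.totalDegree_C _
    rw [h1, zero_add]
    refine (MvPolynomial.totalDegree_finsetProd _ _).trans ?_
    have h2 := (MvPolynomial.le_totalDegree hs).trans hP
    rw [Finsupp.sum_fintype _ _ (by simp)] at h2
    refine (Finset.sum_le_sum fun i _ => ?_).trans h2
    refine (MvPolynomial.totalDegree_pow _ _).trans ?_
    exact (Nat.mul_le_mul_left _ (hg i)).trans (by simp)
  · funext y
    simp only [pfun]
    have := MvPolynomial.eval₂Hom_bind₁ (RingHom.id ℝ) (fun i => y i) g P
    simp only [MvPolynomial.eval] at *
    rw [this]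
    congr 2
    funext i
    simp [g]

lemma map_scale {d : ℕ} (c : EuclideanSpace ℝ (Fin d)) (h r : ℝ) (hh : 0 < h) :
    Measure.map (fun y => c + h • y) (volume.restrict (ball 0 r)) =
      ENNReal.ofReal ((h ^ d)⁻¹) • volume.restrict (ball c (r * h)) := by
  have hpre : (fun y : EuclideanSpace ℝ (Fin d) => c + h • y) ⁻¹' (ball c (r * h)) = ball 0 r := by
    ext y
    simp only [mem_preimage, mem_ball, dist_self_add_left, dist_zero_right, norm_smul,
      Real.norm_eq_abs, abs_of_pos hh]
    rw [mul_comm r h]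
    exact mul_lt_mul_iff_right₀ hh
  rw [← hpre, ← Measure.restrict_map (by fun_prop) measurableSet_ball]
  have : Measure.map (fun y : EuclideanSpace ℝ (Fin d) => c + h • y) volume
      = ENNReal.ofReal ((h ^ d)⁻¹) • volume := by
    have e : (fun y : EuclideanSpace ℝ (Fin d) => c + h • y) = (fun y => c + y) ∘ (fun y => h • y) := rfl
    rw [e, ← Measure.map_map (by fun_prop) (by fun_prop)]
    have := Measure.map_addHaar_smul (volume : Measure (EuclideanSpace ℝ (Fin d))) hh.ne'
    rw [show (fun y : EuclideanSpace ℝ (Fin d) => h • y) = (h • ·) from rfl, this,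
      Measure.map_smul, map_add_left_eq_self]
    simp [abs_of_pos hh]
  rw [this, Measure.restrict_smul]

/-- Poincaré–Wirtinger–Sobolev inequality for polynomials with zero average:
`‖w‖_{L^q(T)} ≤ C h_T^{1 + d/q - d/p} ‖∇w‖_{L^p(T)}`. -/
theorem poincare_wirtinger_sobolev_poly
    (d k : ℕ) (hd : 1 ≤ d) (ρ : ℝ) (hρ : 0 < ρ) (p q : ℝ)
    (hp : 1 ≤ p) (hpq : p ≤ q) (hsob : 1 / p - 1 / (d : ℝ) ≤ 1 / q) :
    ∃ C : ℝ, 0 < C ∧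
      ∀ T : Set (EuclideanSpace ℝ (Fin d)),
        IsOpen T → Bornology.IsBounded T → StarShapedWrtBall ρ T →
        ∀ w : EuclideanSpace ℝ (Fin d) → ℝ, IsPolyDegLE d k w →
          (∫ x in T, w x) = 0 →
          eLpNorm w (ENNReal.ofReal q) (volume.restrict T)
            ≤ ENNReal.ofReal (C * Metric.diam T ^ (1 + (d : ℝ) / q - (d : ℝ) / p)) *
              eLpNorm (fun x => gradient w x) (ENNReal.ofReal p) (volume.restrict T) := by
  obtain ⟨C₀, hC₀, href⟩ := ref_bound d k ρ hρ (ENNReal.ofReal p) (by simpa using hp)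
  have hp0 : 0 < p := by linarith
  have hq0 : 0 < q := by linarith
  set b : ℝ := (volume (closedBall (0 : EuclideanSpace ℝ (Fin d)) 1)).toReal with hb
  have hb0 : 0 ≤ b := ENNReal.toReal_nonneg
  have hbe : volume (closedBall (0 : EuclideanSpace ℝ (Fin d)) 1) = ENNReal.ofReal b :=
    (ENNReal.ofReal_toReal measure_closedBall_lt_top.ne).symm
  refine ⟨b ^ q⁻¹ * (2 * C₀) + 1, by positivity, ?_⟩
  rintro T hTo hTb ⟨c, hcT, -⟩ w ⟨P, hPk, hPw⟩ hmean
  obtain rfl : w = pfun P := funext hPw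
  rcases T.eq_empty_or_nonempty with rfl | hTne
  · simp
  set h := Metric.diam T with hh
  have : Nonempty (Fin d) := ⟨⟨0, hd⟩⟩
  have hpos : 0 < h := by
    rcases (Metric.diam_nonneg (s := T)).lt_or_eq with h1 | h1
    · exact h1
    · exfalso
      have hsub : T.Subsingleton := by
        intro x hx y hy
        have := Metric.dist_le_diam_of_mem hTb hx hy
        rw [← h1] at this
        exact dist_le_zero.1 this
      obtain ⟨x, hx⟩ := hTne
      have : T = {x} := hsub.eq_singleton_of_mem hx
      rw [this] at hTo
      exact not_isOpen_singleton x hTo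
  have hc : c ∈ T := hcT (mem_ball_self (by positivity))
  have hTsub : T ⊆ closedBall c h := fun x hx => Metric.dist_le_diam_of_mem hTb hx hc
  obtain ⟨Q, hQk, hQ⟩ := exists_affine P hPk c h
  obtain ⟨M, hM0, hM, hMle⟩ := href Q hQk
  have hosc : ∀ x ∈ T, |pfun P x - pfun P c| ≤ M := by
    intro x hx
    have h1 := hM (h⁻¹ • (x - c)) (by
      rw [mem_closedBall_zero_iff, norm_smul, norm_inv, Real.norm_eq_abs, abs_of_pos hpos,
        ← dist_eq_norm, inv_mul_le_iff₀ hpos, mul_one]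
      exact hTsub hx)
    rw [hQ] at h1
    simpa [smul_smul, hpos.ne'] using h1
  have hvT : volume T ≤ ENNReal.ofReal (h ^ d * b) := by
    refine (measure_mono hTsub).trans ?_
    rw [Measure.addHaar_closedBall' _ _ hpos.le, hbe, finrank_euclideanSpace_fin,
      ENNReal.ofReal_mul (by positivity)]
  have hvfin : volume T < ⊤ := hvT.trans_lt ENNReal.ofReal_lt_top
  have hvpos : 0 < volume.real T :=
    ENNReal.toReal_pos (hTo.measure_pos volume hTne).ne' hvfin.ne
  have hint : IntegrableOn (pfun P) T :=
    ((pfun_contDiff P).continuous.continuousOn.integrableOn_compact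
      (isCompact_closedBall c h)).mono_set hTsub
  have hPc : |pfun P c| ≤ M := by
    have h1 : ∫ x in T, (pfun P x - pfun P c) = - (volume.real T * pfun P c) := by
      rw [integral_sub hint (integrableOn_const hvfin.ne), hmean]
      simp
    have h2 := norm_setIntegral_le_of_norm_le_const (f := fun x => pfun P x - pfun P c) hvfin hosc
    rw [h1, norm_neg, norm_mul, Real.norm_eq_abs, Real.norm_eq_abs, abs_of_pos hvpos, mul_comm] at h2
    exact le_of_mul_le_mul_right h2 hvpos
  have hsup : ∀ x ∈ T, ‖pfun P x‖ ≤ 2 * M := by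
    intro x hx
    have h1 := hosc x hx
    rw [Real.norm_eq_abs]
    rw [abs_le] at *
    constructor <;> linarith [h1.1, h1.2, hPc.1, hPc.2]
  have hlq := eLpNorm_le_of_ae_bound (p := ENNReal.ofReal q) (μ := volume.restrict T)
    ((ae_restrict_iff' hTo.measurableSet).2 (.of_forall hsup))
  -- gradient scaling
  have hgrad : (fun y => gradient (pfun Q) y)
      = fun y => h • (fun x => gradient (pfun P) x) (c + h • y) := by
    funext y
    rw [hQ]
    have e : fderiv ℝ (fun y => pfun P (c + h • y)) y = h • fderiv ℝ (pfun P) (c + h • y) := by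
      rw [fderiv_comp_smul (f := fun z => pfun P (c + z)), fderiv_comp_add_left]
    simp only [gradient]
    rw [e]; simp
  set N := eLpNorm (fun x => gradient (pfun P) x) (ENNReal.ofReal p) (volume.restrict T) with hN
  have hgn : eLpNorm (fun y => gradient (pfun Q) y) (ENNReal.ofReal p) (volume.restrict (ball 0 ρ))
      ≤ ENNReal.ofReal (h * ((h ^ d)⁻¹) ^ p⁻¹) * N := by
    rw [hgrad]
    have e1 := eLpNorm_const_smul (p := ENNReal.ofReal p) h
      ((fun x => gradient (pfun P) x) ∘ (fun y => c + h • y)) (volume.restrict (ball 0 ρ))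
    rw [← eLpNorm_map_measure (grad_cont P).aestronglyMeasurable (by fun_prop),
      map_scale c h ρ hpos, eLpNorm_smul_measure_of_ne_top ENNReal.ofReal_ne_top] at e1
    refine e1.le.trans ?_
    rw [ENNReal.ofReal_mul hpos.le, mul_assoc, Real.enorm_of_nonneg hpos.le]
    gcongr
    rw [smul_eq_mul, ENNReal.ofReal_rpow_of_nonneg (by positivity) (by simp),
      ENNReal.toReal_div, ENNReal.toReal_ofReal hp0.le, ENNReal.toReal_one, one_div]
    gcongr
    exact eLpNorm_mono_measure _ (Measure.restrict_mono hcT le_rfl)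
  refine hlq.trans ?_
  rw [Measure.restrict_apply_univ, ENNReal.toReal_ofReal hq0.le]
  calc volume T ^ q⁻¹ * ENNReal.ofReal (2 * M)
      ≤ ENNReal.ofReal (h ^ d * b) ^ q⁻¹ * (ENNReal.ofReal 2 *
          (ENNReal.ofReal C₀ * (ENNReal.ofReal (h * ((h ^ d)⁻¹) ^ p⁻¹) * N))) := by
        rw [ENNReal.ofReal_mul (by norm_num : (0:ℝ) ≤ 2)]
        gcongr
        exact hMle.trans (by gcongr)
    _ = ENNReal.ofReal ((h ^ d * b) ^ q⁻¹ * (2 * (C₀ * (h * ((h ^ d)⁻¹) ^ p⁻¹)))) * N := by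
        rw [ENNReal.ofReal_rpow_of_nonneg (by positivity) (by positivity)]
        rw [ENNReal.ofReal_mul (p := (h ^ d * b) ^ q⁻¹) (by positivity),
          ENNReal.ofReal_mul (p := 2) (by positivity), ENNReal.ofReal_mul (p := C₀) hC₀]
        ring
    _ ≤ _ := by
        refine mul_le_mul_left (ENNReal.ofReal_le_ofReal ?_) _
        have e : (h ^ d * b) ^ q⁻¹ * (2 * (C₀ * (h * ((h ^ d)⁻¹) ^ p⁻¹)))
            = (b ^ q⁻¹ * (2 * C₀)) * h ^ (1 + (d : ℝ) / q - (d : ℝ) / p) := by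
          rw [Real.mul_rpow (by positivity) hb0, Real.rpow_sub hpos, Real.rpow_add hpos,
            Real.rpow_one, Real.inv_rpow (by positivity), ← Real.rpow_natCast, ← Real.rpow_mul hpos.le,
            ← Real.rpow_mul hpos.le]
          simp only [div_eq_mul_inv]
          ring
        rw [e]
        gcongr
        linarith
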